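/- For every natural number n and every B in {22, 29, 92, 127, 169, 239}, the number of 200-regular partitions satisfies b_200(6125n + 25B − 26) ≡ p_17(245n + B) (mod 2). -/

import Mathlib

/-- The number of `m`-regular partitions of `n`, i.e. partitions of `n`
in which no part is divisible by `m`. -/
noncomputable def numRegularPartitions (m n : ℕ) : ℕ :=
  Nat.card {π : n.Partition // ∀ j ∈ π.parts, ¬ m ∣ j}

/-- The number of `t`-multipartitions of `n`, i.e. `t`-tuples of partitions
whose sizes sum to `n`. -/
noncomputable def numMultipartitions (t n : ℕ) : ℕ :=
  Nat.card {f : Fin t → Σ k : ℕ, k.Partition // (∑ i, (f i).1) = n}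

/-!
Modulo `2`, squaring a power series is the substitution `X ↦ X ^ 2`, so the Euler products
`f_k = ∏ (1 - X ^ (k * n))` satisfy `f_(2 * k) = f_k ^ 2`. By the pentagonal number theorem, the
product of `f_a` and the dilated triangular number series `ψ_b` is the series of a binary quadratic
form on a lattice. Cancelling the pairs exchanged by a reflection of that lattice gives
`f_1 * ψ_1 = f_4`, hence `ψ_1 = f_1 ^ 3`; combined with a similarity of lattices it gives
`f_1 ^ 6 + X * f_5 ^ 6 = f_1 * f_5`.

Dividing the last identity by powers of `f_1` and separating residue classes of exponents modulo `5`
yields a quadratic equation for a part of `1 / f_1` and a linear one for a part of `1 / f_1 ^ 3`.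
With their solutions, `f_200 / f_1` can be dissected twice:
`∑ b_200(25 * n + 24) X ^ n = f_1 * f_5 ^ 6 + X ^ 2 * f_5 ^ 20 / f_1 ^ 21`, where
`X ^ 4 * f_5 ^ 20 / f_1 ^ 21 = 1 / f_1 ^ 17 + f_1 ^ 3 / f_5 ^ 4`.

The series `f_1 ^ 3 / f_5 ^ 4` has no exponents congruent to `2` or `4` modulo `5`, and the `n`-th
coefficient of `f_1 * f_5 ^ 6 = f_1 * ψ_10` counts representations of `24 * n + 31` by
`x ^ 2 + 30 * y ^ 2`. There are none if a prime modulo which `-30` is not a square divides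
`24 * n + 31` exactly once, and `7` is such a prime.
-/

open PowerSeries Filter

section WeightSeries

variable {R ι κ : Type*} [CommRing R]

/-- The generating series `∑ i, X ^ w i` of a weight function `w`. It is meaningful when `w` has
finite fibres, which is expressed by `Tendsto w cofinite cofinite`; an infinite fibre contributes
the coefficient `0`. -/
noncomputable def weightSeries (R : Type*) [CommRing R] (w : ι → ℕ) : R⟦X⟧ :=
  mk fun n => (Nat.card {i // w i = n} : R)

@[simp]
theorem coeff_weightSeries (w : ι → ℕ) (n : ℕ) :
    coeff n (weightSeries R w) = Nat.card {i // w i = n} :=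
  coeff_mk _ _

theorem finite_preimage_Iic {w : ι → ℕ} (hw : Tendsto w cofinite cofinite) (n : ℕ) :
    (w ⁻¹' Set.Iic n).Finite := by
  simpa [Set.preimage, Set.compl_def] using hw (Set.finite_Iic n).compl_mem_cofinite

theorem finite_fiber {w : ι → ℕ} (hw : Tendsto w cofinite cofinite) (n : ℕ) :
    Finite {i // w i = n} :=
  ((finite_preimage_Iic hw n).subset fun _ hi => le_of_eq hi : {i | w i = n}.Finite).to_subtype

theorem tendsto_cofinite_add {v : ι → ℕ} {w : κ → ℕ} (hv : Tendsto v cofinite cofinite)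
    (hw : Tendsto w cofinite cofinite) :
    Tendsto (fun p : ι × κ => v p.1 + w p.2) cofinite cofinite := by
  refine Tendsto.cofinite_of_finite_preimage_singleton fun n =>
    (((finite_preimage_Iic hv n).prod (finite_preimage_Iic hw n)).subset ?_).to_subtype
  rintro p (rfl : v p.1 + w p.2 = n)
  exact ⟨Nat.le_add_right _ _, Nat.le_add_left _ _⟩

theorem tendsto_mul_cofinite {c : ℕ} (hc : c ≠ 0) {w : ι → ℕ}
    (hw : Tendsto w cofinite cofinite) : Tendsto (fun i => c * w i) cofinite cofinite :=
  (mul_right_injective₀ hc).tendsto_cofinite.comp hw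

theorem tendsto_cofinite_subtype {w : ι → ℕ} {p : ι → Prop} (hw : Tendsto w cofinite cofinite) :
    Tendsto (fun i : {i // p i} => w i) cofinite cofinite :=
  hw.comp Subtype.val_injective.tendsto_cofinite

theorem weightSeries_comp_equiv (e : κ ≃ ι) (w : ι → ℕ) :
    weightSeries R (w ∘ e) = weightSeries R w := by
  ext n
  simp only [coeff_weightSeries]
  congr 1
  exact Nat.card_congr (e.subtypeEquiv fun _ => Iff.rfl)

theorem weightSeries_mul {v : ι → ℕ} {w : κ → ℕ} (hv : Tendsto v cofinite cofinite)
    (hw : Tendsto w cofinite cofinite) :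
    weightSeries R v * weightSeries R w =
      weightSeries R fun p : ι × κ => v p.1 + w p.2 := by
  ext n
  have hv' := finite_fiber hv
  have hw' := finite_fiber hw
  let e : {p : ι × κ // v p.1 + w p.2 = n} ≃
      Σ a : Finset.HasAntidiagonal.antidiagonal n, {i // v i = a.1.1} × {j // w j = a.1.2} :=
    { toFun p := ⟨⟨(v p.1.1, w p.1.2), by simpa using p.2⟩, ⟨p.1.1, rfl⟩, ⟨p.1.2, rfl⟩⟩
      invFun q := ⟨(q.2.1, q.2.2), by
        rw [q.2.1.2, q.2.2.2]
        exact Finset.HasAntidiagonal.mem_antidiagonal.1 q.1.2⟩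
      left_inv _ := rfl
      right_inv := by
        rintro ⟨⟨⟨a, b⟩, _⟩, ⟨i, rfl : v i = a⟩, ⟨j, rfl : w j = b⟩⟩
        rfl }
  simp only [coeff_mul, coeff_weightSeries, Nat.card_congr e, Nat.card_sigma, Nat.card_prod,
    Nat.cast_sum, Nat.cast_mul]
  exact (Finset.sum_coe_sort _
    fun a : ℕ × ℕ => (Nat.card {i // v i = a.1} : R) * Nat.card {j // w j = a.2}).symm

theorem weightSeries_pow {w : ι → ℕ} (hw : Tendsto w cofinite cofinite) (t : ℕ) :
    weightSeries R w ^ t = weightSeries R fun f : Fin t → ι => ∑ i, w (f i) := by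
  have key : Tendsto (fun f : Fin t → ι => ∑ i, w (f i)) cofinite cofinite ∧
      weightSeries R w ^ t = weightSeries R fun f : Fin t → ι => ∑ i, w (f i) := by
    induction t with
    | zero =>
      refine ⟨(Function.injective_of_subsingleton _).tendsto_cofinite, ?_⟩
      ext n
      rcases eq_or_ne n 0 with rfl | hn
      · simp
      · have : IsEmpty {_f : Fin 0 → ι // 0 = n} := ⟨fun f => hn f.2.symm⟩
        simp [coeff_one, hn]
    | succ t ih =>
      have h : (fun f : Fin (t + 1) → ι => ∑ i, w (f i)) =
          (fun p : ι × (Fin t → ι) => w p.1 + ∑ i, w (p.2 i)) ∘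
            (Fin.consEquiv fun _ => ι).symm := by
        ext f
        simp [Fin.sum_univ_succ, Fin.tail]
      rw [h, weightSeries_comp_equiv, ← weightSeries_mul hw ih.1, ← ih.2, pow_succ']
      exact ⟨(tendsto_cofinite_add hw ih.1).comp (Equiv.injective _).tendsto_cofinite, rfl⟩
  exact key.2

theorem expand_weightSeries {c : ℕ} (hc : c ≠ 0) (w : ι → ℕ) :
    expand c hc (weightSeries R w) = weightSeries R fun i => c * w i := by
  ext n
  rw [coeff_expand]
  split_ifs with h
  · obtain ⟨m, rfl⟩ := h
    simp [hc]
  · have : IsEmpty {i // c * w i = n} := ⟨fun i => h ⟨_, i.2.symm⟩⟩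
    simp

theorem weightSeries_const_add (c : ℕ) (w : ι → ℕ) :
    weightSeries R (fun i => c + w i) = X ^ c * weightSeries R w := by
  ext n
  rw [coeff_X_pow_mul']
  split_ifs with h
  · obtain ⟨m, rfl⟩ := Nat.exists_eq_add_of_le h
    simp
  · have : IsEmpty {i // c + w i = n} := ⟨fun i => h (i.2 ▸ Nat.le_add_right c _)⟩
    simp

theorem weightSeries_eq_add_compl {w : ι → ℕ} (hw : Tendsto w cofinite cofinite) (p : ι → Prop) :
    weightSeries R w =
      weightSeries R (fun i : {i // p i} => w i) + weightSeries R fun i : {i // ¬ p i} => w i := by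
  classical
  ext n
  have := finite_fiber hw n
  have hcomm (q : ι → Prop) : Nat.card {i : {i // q i} // w i = n} =
      Nat.card {i : {i // w i = n} // q i} :=
    Nat.card_congr ((Equiv.subtypeSubtypeEquivSubtypeInter q (w · = n)).trans
      ((Equiv.subtypeEquivRight fun _ => and_comm).trans
        (Equiv.subtypeSubtypeEquivSubtypeInter (w · = n) q).symm))
  simp only [coeff_weightSeries, map_add, hcomm, ← Nat.cast_add, ← Nat.card_sum]
  rw [Nat.card_congr (Equiv.sumCompl fun i : {i // w i = n} => p i)]

/-- In characteristic two the points moved by a weight preserving involution cancel in pairs. -/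
theorem weightSeries_eq_fixedPoints [CharP R 2] {w : ι → ℕ} (hw : Tendsto w cofinite cofinite)
    {σ : ι → ι} (hσ : Function.Involutive σ) (hwσ : ∀ i, w (σ i) = w i) :
    weightSeries R w = weightSeries R fun i : Function.fixedPoints σ => w i := by
  classical
  ext n
  have := finite_fiber hw n
  have := Fintype.ofFinite {i // w i = n}
  let τ : Function.End {i // w i = n} := fun i => ⟨σ i, (hwσ i).trans i.2⟩
  have hτ : τ ^ 2 ^ 1 = 1 := by
    funext i
    exact Subtype.ext (hσ i)
  have e : {i : Function.fixedPoints σ // w i = n} ≃ Function.fixedPoints τ :=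
    { toFun i := ⟨⟨i.1, i.2⟩, Subtype.ext i.1.2⟩
      invFun i := ⟨⟨i.1, congrArg Subtype.val i.2⟩, i.1.2⟩ }
  rw [coeff_weightSeries, coeff_weightSeries, Nat.card_congr e, Nat.card_eq_fintype_card,
    Nat.card_eq_fintype_card]
  exact CharP.natCast_eq_natCast' R 2 (Equiv.Perm.card_fixedPoints_modEq hτ)

end WeightSeries

section ResiduePart

variable {R : Type*} [CommRing R] {m : ℕ}

/-- The part of a power series supported on the exponents in the residue class `r` modulo `m`. -/
noncomputable def residuePart (r : ZMod m) : R⟦X⟧ →ₗ[R] R⟦X⟧ where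
  toFun φ := mk fun n => if (n : ZMod m) = r then coeff n φ else 0
  map_add' φ ψ := by ext n; simp [ite_add_zero]
  map_smul' a φ := by ext n; simp

theorem coeff_residuePart (r : ZMod m) (φ : R⟦X⟧) (n : ℕ) :
    coeff n (residuePart r φ) = if (n : ZMod m) = r then coeff n φ else 0 := by
  simp [residuePart]

theorem residuePart_mul_expand (hm : m ≠ 0) (r : ZMod m) (φ ψ : R⟦X⟧) :
    residuePart r (φ * expand m hm ψ) = residuePart r φ * expand m hm ψ := by
  ext n
  have h : ∀ p ∈ Finset.HasAntidiagonal.antidiagonal n,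
      coeff p.1 (residuePart r φ) * coeff p.2 (expand m hm ψ) =
        if (n : ZMod m) = r then coeff p.1 φ * coeff p.2 (expand m hm ψ) else 0 := by
    rintro ⟨i, j⟩ hij
    obtain rfl : i + j = n := Finset.HasAntidiagonal.mem_antidiagonal.1 hij
    by_cases hj : m ∣ j
    · simp [coeff_residuePart, (ZMod.natCast_eq_zero_iff j m).2 hj]
    · simp [coeff_expand_of_not_dvd m hm ψ hj]
  rw [coeff_residuePart, coeff_mul, coeff_mul, Finset.sum_congr rfl h]
  split_ifs <;> simp

theorem residuePart_X_pow_mul {k : ℕ} {r s : ZMod m} (h : k + r = s) (φ : R⟦X⟧) :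
    residuePart s (X ^ k * φ) = X ^ k * residuePart r φ := by
  ext n
  rw [coeff_residuePart, coeff_X_pow_mul', coeff_X_pow_mul']
  by_cases hk : k ≤ n
  · obtain ⟨i, rfl⟩ := Nat.exists_eq_add_of_le hk
    simp [coeff_residuePart, ← h]
  · simp [hk]

theorem residuePart_expand {p : ℕ} (hp : p ≠ 0) (hpm : p.Coprime m) {r s : ZMod m}
    (h : p * r = s) (φ : R⟦X⟧) :
    residuePart s (expand p hp φ) = expand p hp (residuePart r φ) := by
  ext n
  simp only [coeff_residuePart, coeff_expand, ← h]
  by_cases hn : p ∣ n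
  · obtain ⟨k, rfl⟩ := hn
    have hu : IsUnit (p : ZMod m) := (ZMod.isUnit_iff_coprime p m).2 hpm
    simp [Nat.pos_of_ne_zero hp, hu.mul_right_inj]
  · simp [hn]

theorem coeff_of_residuePart_eq {r : ℕ} (hm : m ≠ 0) {φ ψ : R⟦X⟧}
    (h : residuePart (r : ZMod m) φ = X ^ r * expand m hm ψ) (n : ℕ) :
    coeff (m * n + r) φ = coeff n ψ := by
  have := congrArg (coeff (m * n + r)) h
  simpa [coeff_residuePart, coeff_X_pow_mul', hm] using this

theorem residuePart_weightSeries_eq_zero {ι : Type*} {w : ι → ℕ} {r : ZMod m}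
    (hw : ∀ i, (w i : ZMod m) ≠ r) :
    residuePart r (weightSeries R w) = 0 := by
  ext n
  rw [coeff_residuePart, coeff_weightSeries, map_zero, ite_eq_right_iff]
  rintro rfl
  have : IsEmpty {i // w i = n} := ⟨fun i => hw i (by rw [i.2])⟩
  simp

theorem residuePart_weightSeries {ι κ : Type*} {w : ι → ℕ} {v : κ → ℕ} {r : ZMod m} {c : ℕ}
    {g : κ → ι} (hg : Function.Injective g) (hr : ∀ i, (w i : ZMod m) = r ↔ i ∈ Set.range g)
    (hw : ∀ k, w (g k) = c + v k) :
    residuePart r (weightSeries R w) = X ^ c * weightSeries R v := by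
  rw [← weightSeries_const_add, ← funext hw]
  ext n
  rw [coeff_residuePart, coeff_weightSeries, coeff_weightSeries]
  split_ifs with hn
  · have hbij : Function.Bijective fun k : {k // w (g k) = n} =>
        (⟨g k, k.2⟩ : {i // w i = n}) := by
      refine ⟨fun k l h => Subtype.ext (hg (congrArg Subtype.val h)), fun i => ?_⟩
      obtain ⟨k, hk⟩ := (hr i).1 (by rw [i.2, hn])
      exact ⟨⟨k, by rw [hk, i.2]⟩, Subtype.ext hk⟩
    rw [Nat.card_congr (Equiv.ofBijective _ hbij)]
  · have : IsEmpty {k // w (g k) = n} := ⟨fun k => hn (by rw [← k.2, hr]; exact ⟨k, rfl⟩)⟩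
    simp

end ResiduePart

theorem eq_of_X_mul_sq_add_mul_eq {R : Type*} [CommRing R] [IsDomain R] {a b y z : R⟦X⟧}
    (hb : constantCoeff b ≠ 0) (h : X * a * y ^ 2 + b * y = X * a * z ^ 2 + b * z) : y = z := by
  have hfactor : (y - z) * (b + X * a * (y + z)) = 0 := by linear_combination h
  have hne : b + X * a * (y + z) ≠ 0 := fun h₀ =>
    hb (by simpa using congrArg constantCoeff h₀)
  exact sub_eq_zero.1 ((mul_eq_zero.1 hfactor).resolve_right hne)

section EulerProducts

/-- The dilated Euler product `∏ (1 - X ^ (k * n))` modulo `2`, in the form given by the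
pentagonal number theorem. -/
noncomputable def eulerSeries (k : ℕ) : (ZMod 2)⟦X⟧ :=
  weightSeries (ZMod 2) fun j : ℤ => k * pentagonal j

/-- The generating series of the number of partitions, dilated by `k` and reduced modulo `2`. -/
noncomputable def partitionSeries (k : ℕ) : (ZMod 2)⟦X⟧ :=
  weightSeries (ZMod 2) fun π : Σ n : ℕ, n.Partition => k * π.1

theorem expand_eulerSeries {c : ℕ} (hc : c ≠ 0) (k : ℕ) :
    expand c hc (eulerSeries k) = eulerSeries (c * k) := by
  simp only [eulerSeries, expand_weightSeries, mul_assoc]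

theorem expand_partitionSeries {c : ℕ} (hc : c ≠ 0) (k : ℕ) :
    expand c hc (partitionSeries k) = partitionSeries (c * k) := by
  simp only [partitionSeries, expand_weightSeries, mul_assoc]

theorem pentagonalSeries_eq_eulerSeries : pentagonalSeries (ZMod 2) = eulerSeries 1 := by
  ext n
  simp only [eulerSeries, one_mul, coeff_weightSeries]
  by_cases h : n ∈ Set.range pentagonal
  · obtain ⟨k, rfl⟩ := h
    simp [pentagonal_inj, coeff_pentagonalSeries_pentagonal]
  · have : IsEmpty {j // pentagonal j = n} := ⟨fun j => h ⟨j, j.2⟩⟩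
    rw [coeff_pentagonalSeries_eq_zero] <;> simp_all

theorem coeff_partitionSeries_one_pow (t n : ℕ) :
    coeff n (partitionSeries 1 ^ t) = numMultipartitions t n := by
  have h : Tendsto (fun π : Σ n : ℕ, n.Partition => 1 * π.1) cofinite cofinite :=
    Tendsto.cofinite_of_finite_preimage_singleton fun n => by
      simp only [one_mul]
      exact Finite.of_equiv _ (Equiv.sigmaSubtype n).symm
  rw [partitionSeries, weightSeries_pow h, coeff_weightSeries, numMultipartitions]
  simp only [one_mul]

open scoped PowerSeries.WithPiTopology in
theorem partitionSeries_one_mul_eulerSeries_one : partitionSeries 1 * eulerSeries 1 = 1 := by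
  let : TopologicalSpace (ZMod 2) := ⊥
  have : DiscreteTopology (ZMod 2) := ⟨rfl⟩
  have hP : (mk fun n => ((Nat.Partition.restricted n fun _ => True).card : ZMod 2)) =
      partitionSeries 1 := by
    ext n
    simp only [partitionSeries, one_mul, coeff_weightSeries, coeff_mk]
    rw [Nat.card_congr (Equiv.sigmaSubtype n)]
    simp [Nat.Partition.restricted]
  have h := (Nat.Partition.hasProd_powerSeriesMk_card_restricted (ZMod 2) fun _ => True).mul
    (WithPiTopology.hasProd_one_sub_X_pow (ZMod 2))
  rw [hP, pentagonalSeries_eq_eulerSeries] at h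
  refine h.unique ?_
  convert hasProd_one with i
  simp only [if_true, pow_mul]
  exact WithPiTopology.tsum_pow_mul_one_sub_of_constantCoeff_eq_zero (by simp)

theorem partitionSeries_mul_eulerSeries {k : ℕ} (hk : k ≠ 0) :
    partitionSeries k * eulerSeries k = 1 := by
  simpa [expand_eulerSeries, expand_partitionSeries] using
    congrArg (expand k hk) partitionSeries_one_mul_eulerSeries_one

open scoped PowerSeries.WithPiTopology in
theorem hasProd_one_sub_X_pow_mul {m : ℕ} (hm : m ≠ 0) :
    letI : TopologicalSpace (ZMod 2) := ⊥
    HasProd (fun i => (1 - X ^ (m * (i + 1)) : (ZMod 2)⟦X⟧)) (eulerSeries m) := by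
  let : TopologicalSpace (ZMod 2) := ⊥
  have : DiscreteTopology (ZMod 2) := ⟨rfl⟩
  have hcont : Continuous (expand m hm : (ZMod 2)⟦X⟧ →ₐ[ZMod 2] (ZMod 2)⟦X⟧) := by
    refine continuous_iff_continuousAt.2 fun φ =>
      (WithPiTopology.tendsto_iff_coeff_tendsto _ _ _ _).2 fun d => ?_
    simp only [coeff_expand]
    split_ifs
    · exact (WithPiTopology.continuous_coeff _ _).continuousAt
    · exact tendsto_const_nhds
  have h := (WithPiTopology.hasProd_one_sub_X_pow (ZMod 2)).map (expand m hm) hcont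
  simpa [pentagonalSeries_eq_eulerSeries, expand_eulerSeries, Function.comp_def, ← pow_mul] using h

open scoped PowerSeries.WithPiTopology in
theorem mk_numRegularPartitions {m : ℕ} (hm : m ≠ 0) :
    (mk fun n => (numRegularPartitions m n : ZMod 2)) = partitionSeries 1 * eulerSeries m := by
  let : TopologicalSpace (ZMod 2) := ⊥
  have : DiscreteTopology (ZMod 2) := ⟨rfl⟩
  have hB : (mk fun n => ((Nat.Partition.countRestricted n m).card : ZMod 2)) =
      mk fun n => (numRegularPartitions m n : ZMod 2) := by
    rw [← Nat.Partition.powerSeriesMk_card_restricted_eq_powerSeriesMk_card_countRestricted _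
      (Nat.pos_of_ne_zero hm)]
    ext n
    simp only [coeff_mk, numRegularPartitions, Nat.card_eq_fintype_card, Fintype.card_subtype,
      Nat.Partition.restricted]
  have h := (Nat.Partition.hasProd_powerSeriesMk_card_countRestricted (ZMod 2)
    (Nat.pos_of_ne_zero hm)).mul (WithPiTopology.hasProd_one_sub_X_pow (ZMod 2))
  rw [hB, pentagonalSeries_eq_eulerSeries] at h
  have hfactor (i : ℕ) : (∑ j ∈ Finset.range m, X ^ ((i + 1) * j)) * (1 - X ^ (i + 1)) =
      (1 - X ^ (m * (i + 1)) : (ZMod 2)⟦X⟧) := by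
    simp only [mul_comm m, pow_mul]
    exact geom_sum_mul_neg _ m
  simp only [hfactor] at h
  have key := h.unique (hasProd_one_sub_X_pow_mul hm)
  linear_combination partitionSeries 1 * key -
    (mk fun n => (numRegularPartitions m n : ZMod 2)) * partitionSeries_one_mul_eulerSeries_one

end EulerProducts

section TriangularNumbers

/-- The triangular number `s * (s + 1) / 2`, indexed by all integers, so that `s` and `-1 - s`
have the same value. -/
def triangular (s : ℤ) : ℕ := (s * (s + 1) / 2).toNat

theorem two_mul_natCast_triangular (s : ℤ) : 2 * (triangular s : ℤ) = s * (s + 1) := by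
  have hs : 0 ≤ s * (s + 1) := by
    rcases le_or_gt 0 s with h | h <;> nlinarith
  rw [triangular, Int.toNat_of_nonneg (by omega),
    Int.two_mul_ediv_two_of_even (Int.even_mul_succ_self s)]

theorem triangular_neg_sub (s : ℤ) : triangular (-1 - s) = triangular s := by
  grind [two_mul_natCast_triangular]

theorem triangular_two_mul_injective : Function.Injective fun j : ℤ => triangular (2 * j) := by
  intro x y h
  replace h : (2 * (x + y) + 1) * (x - y) = 0 := by grind [two_mul_natCast_triangular]
  cases mul_eq_zero.mp h <;> grind

theorem tendsto_triangular_cofinite : Tendsto triangular cofinite cofinite := by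
  refine Tendsto.cofinite_of_finite_preimage_singleton fun n =>
    ((Set.finite_Icc (-(n : ℤ) - 1) n).subset ?_).to_subtype
  rintro s (rfl : triangular s = n)
  have := two_mul_natCast_triangular s
  constructor <;> nlinarith

/-- The series `∑ X ^ (k * (j * (j + 1) / 2))`, summed over `j ≥ 0`. Each triangular number is
listed once, as `triangular (2 * j)` for a unique integer `j`. -/
noncomputable def triangularSeries (k : ℕ) : (ZMod 2)⟦X⟧ :=
  weightSeries (ZMod 2) fun j : ℤ => k * triangular (2 * j)

theorem expand_triangularSeries {c : ℕ} (hc : c ≠ 0) (k : ℕ) :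
    expand c hc (triangularSeries k) = triangularSeries (c * k) := by
  simp only [triangularSeries, expand_weightSeries, mul_assoc]

end TriangularNumbers

section MixedForms

/-- The weight `a * pentagonal k + b * triangular s` on the pairs `(k, s)`. Completing squares
turns it into a binary quadratic form. -/
def mixedWeight (a b : ℕ) (p : ℤ × ℤ) : ℕ := a * pentagonal p.1 + b * triangular p.2

theorem two_mul_natCast_mixedWeight (a b : ℕ) (p : ℤ × ℤ) :
    2 * (mixedWeight a b p : ℤ) =
      a * (p.1 * (3 * p.1 - 1)) + b * (p.2 * (p.2 + 1)) := by
  rw [← two_mul_natCast_pentagonal, ← two_mul_natCast_triangular, mixedWeight]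
  push_cast
  ring

theorem tendsto_mixedWeight_cofinite {a b : ℕ} (ha : a ≠ 0) (hb : b ≠ 0) :
    Tendsto (mixedWeight a b) cofinite cofinite :=
  tendsto_cofinite_add (v := fun k => a * pentagonal k) (w := fun s => b * triangular s)
    (tendsto_mul_cofinite ha pentagonal_injective.tendsto_cofinite)
    (tendsto_mul_cofinite hb tendsto_triangular_cofinite)

/-- The pairs of integers of odd sum, on which `mixedWeight` has the generating series
`eulerSeries a * triangularSeries b`. -/
abbrev OddPair : Type := {p : ℤ × ℤ // Odd (p.1 + p.2)}

/-- A pair `(k, j)` determines the one of the two indices `2 * j` and `-1 - 2 * j` of the same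
triangular number whose parity is opposite to that of `k`. -/
def OddPair.equivProd : ℤ × ℤ ≃ OddPair where
  toFun p := ⟨(p.1, if Even p.1 then -1 - 2 * p.2 else 2 * p.2), by grind⟩
  invFun p := (p.1.1, if Even p.1.1 then (-1 - p.1.2) / 2 else p.1.2 / 2)
  left_inv p := by ext <;> grind
  right_inv p := by ext <;> grind

theorem eulerSeries_mul_triangularSeries {a b : ℕ} (ha : a ≠ 0) (hb : b ≠ 0) :
    eulerSeries a * triangularSeries b =
      weightSeries (ZMod 2) fun p : OddPair => mixedWeight a b p := by
  rw [eulerSeries, triangularSeries, ← weightSeries_comp_equiv OddPair.equivProd,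
    weightSeries_mul (tendsto_mul_cofinite ha pentagonal_injective.tendsto_cofinite)
      (tendsto_mul_cofinite hb triangular_two_mul_injective.tendsto_cofinite)]
  congr 1
  ext p
  simp only [mixedWeight, OddPair.equivProd, Function.comp_apply, Equiv.coe_fn_mk]
  split_ifs
  · rw [triangular_neg_sub]
  · rfl

/-- The reflection of the lattice of pairs `(k, s)` with `c + 3 ∣ 2 * (3 * k - s - 1)` in the line
`s = 3 * k - 1`, along the direction `(-1, c)` orthogonal to it for `mixedWeight c 1`. -/
def latticeReflection (c : ℕ) (p : {p : ℤ × ℤ // (c + 3 : ℤ) ∣ 2 * (3 * p.1 - p.2 - 1)}) :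
    {p : ℤ × ℤ // (c + 3 : ℤ) ∣ 2 * (3 * p.1 - p.2 - 1)} :=
  ⟨(p.1.1 - 2 * (3 * p.1.1 - p.1.2 - 1) / (c + 3),
    p.1.2 + c * (2 * (3 * p.1.1 - p.1.2 - 1) / (c + 3))), by
    obtain ⟨⟨k, s⟩, y, hy⟩ := p
    have hc : (c + 3 : ℤ) ≠ 0 := by positivity
    simp only at hy ⊢
    rw [hy, Int.mul_ediv_cancel_left y hc]
    exact ⟨-y, by linear_combination hy⟩⟩

theorem latticeReflection_mk {c : ℕ} {k s y : ℤ} (hy : 2 * (3 * k - s - 1) = (c + 3) * y) :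
    (latticeReflection c ⟨(k, s), y, hy⟩ : ℤ × ℤ) = (k - y, s + c * y) := by
  have hc : (c + 3 : ℤ) ≠ 0 := by positivity
  simp only [latticeReflection, hy, Int.mul_ediv_cancel_left y hc]

theorem latticeReflection_involutive (c : ℕ) : Function.Involutive (latticeReflection c) := by
  rintro ⟨⟨k, s⟩, y, hy⟩
  have hy' : 2 * (3 * (k - y) - (s + c * y) - 1) = (c + 3) * -y := by linear_combination hy
  have h : latticeReflection c ⟨(k, s), y, hy⟩ = ⟨(k - y, s + c * y), -y, hy'⟩ :=
    Subtype.ext (latticeReflection_mk hy)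
  rw [h]
  refine Subtype.ext ((latticeReflection_mk hy').trans ?_)
  ext <;> ring

theorem mixedWeight_latticeReflection (c : ℕ)
    (p : {p : ℤ × ℤ // (c + 3 : ℤ) ∣ 2 * (3 * p.1 - p.2 - 1)}) :
    mixedWeight c 1 (latticeReflection c p) = mixedWeight c 1 p := by
  obtain ⟨⟨k, s⟩, y, hy⟩ := p
  have h := two_mul_natCast_mixedWeight c 1 (k, s)
  have h' := two_mul_natCast_mixedWeight c 1 (k - y, s + c * y)
  rw [latticeReflection_mk hy]
  grind

/-- The line `s = 3 * k - 1` fixed by the reflection. -/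
def fixedPointsEquiv (c : ℕ) : ℤ ≃ Function.fixedPoints (latticeReflection c) where
  toFun k := ⟨⟨(k, 3 * k - 1), 0, by ring⟩,
    Subtype.ext (by rw [latticeReflection_mk (y := 0)] <;> simp)⟩
  invFun p := p.1.1.1
  right_inv := by
    rintro ⟨⟨⟨k, s⟩, y, hy⟩, h⟩
    have h := congrArg Subtype.val h
    rw [latticeReflection_mk hy] at h
    grind

theorem weightSeries_mixedWeight_eq_eulerSeries {c : ℕ} (hc : c ≠ 0) :
    weightSeries (ZMod 2)
        (fun p : {p : ℤ × ℤ // (c + 3 : ℤ) ∣ 2 * (3 * p.1 - p.2 - 1)} => mixedWeight c 1 p) =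
      eulerSeries (c + 3) := by
  rw [weightSeries_eq_fixedPoints
    (tendsto_cofinite_subtype (tendsto_mixedWeight_cofinite hc one_ne_zero))
    (latticeReflection_involutive c) (mixedWeight_latticeReflection c),
    ← weightSeries_comp_equiv (fixedPointsEquiv c), eulerSeries]
  congr 1
  ext k
  have h := two_mul_natCast_mixedWeight c 1 (k, 3 * k - 1)
  have h' := two_mul_natCast_pentagonal k
  simp only [fixedPointsEquiv, Function.comp_apply, Equiv.coe_fn_mk]
  grind

theorem eulerSeries_one_mul_triangularSeries_one :
    eulerSeries 1 * triangularSeries 1 = eulerSeries 4 := by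
  rw [eulerSeries_mul_triangularSeries one_ne_zero one_ne_zero,
    ← weightSeries_mixedWeight_eq_eulerSeries (c := 1) one_ne_zero,
    ← weightSeries_comp_equiv (Equiv.subtypeEquivRight fun p : ℤ × ℤ => ?_)]
  · rfl
  · rw [Int.odd_iff]
    push_cast
    omega

/-- The sublattice `4 ∣ 3 * k - s - 1` of the lattice of odd pairs is the domain of the reflection
`latticeReflection 5`. -/
def OddPair.equivDvd : {p : OddPair // (4 : ℤ) ∣ 3 * p.1.1 - p.1.2 - 1} ≃
    {p : ℤ × ℤ // ((5 : ℕ) + 3 : ℤ) ∣ 2 * (3 * p.1 - p.2 - 1)} where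
  toFun p := ⟨p.1.1, by grind⟩
  invFun p := ⟨⟨p.1, by grind⟩, by grind⟩

/-- The part of the lattice of odd pairs outside the sublattice `4 ∣ 3 * k - s - 1` is
a rescaled copy of the lattice of odd pairs itself. -/
def OddPair.equivNotDvd : OddPair ≃ {p : OddPair // ¬ (4 : ℤ) ∣ 3 * p.1.1 - p.1.2 - 1} where
  toFun p := ⟨⟨((1 - p.1.1 + p.1.2) / 2, (-3 - 3 * p.1.1 - 5 * p.1.2) / 2), by grind⟩, by grind⟩
  invFun p := ⟨((1 - p.1.1.2 - 5 * p.1.1.1) / 4, (3 * p.1.1.1 - p.1.1.2 - 3) / 4), by grind⟩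
  left_inv p := by ext <;> grind
  right_inv p := by ext <;> grind

theorem mixedWeight_equivNotDvd (p : OddPair) :
    mixedWeight 5 1 (OddPair.equivNotDvd p) = 1 + mixedWeight 2 10 p := by
  obtain ⟨⟨k, s⟩, h⟩ := p
  obtain ⟨l, hl⟩ : ∃ l, s = 2 * l - 1 + k := ⟨(1 - k + s) / 2, by grind⟩
  have hp : (OddPair.equivNotDvd ⟨(k, s), h⟩ : ℤ × ℤ) = (l, 1 - 4 * k - 5 * l) := by
    ext <;> grind [OddPair.equivNotDvd]
  rw [hp]
  have h₁ := two_mul_natCast_mixedWeight 5 1 (l, 1 - 4 * k - 5 * l)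
  have h₂ := two_mul_natCast_mixedWeight 2 10 (k, s)
  subst hl
  zify
  push_cast at h₁ h₂
  linarith

theorem eulerSeries_five_mul_triangularSeries_one :
    eulerSeries 5 * triangularSeries 1 =
      eulerSeries 8 + X * (eulerSeries 2 * triangularSeries 10) := by
  rw [eulerSeries_mul_triangularSeries (by norm_num) one_ne_zero,
    eulerSeries_mul_triangularSeries (by norm_num) (by norm_num),
    weightSeries_eq_add_compl (tendsto_cofinite_subtype
      (tendsto_mixedWeight_cofinite (by norm_num) one_ne_zero))
      fun p : OddPair => (4 : ℤ) ∣ 3 * p.1.1 - p.1.2 - 1]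
  congr 1
  · rw [← weightSeries_mixedWeight_eq_eulerSeries (c := 5) (by norm_num)]
    exact weightSeries_comp_equiv OddPair.equivDvd fun p => mixedWeight 5 1 p
  · rw [← weightSeries_comp_equiv OddPair.equivNotDvd, ← pow_one X, ← weightSeries_const_add]
    exact congrArg _ (funext mixedWeight_equivNotDvd)

end MixedForms

section ModTwo

theorem powerSeries_two_eq_zero : (2 : (ZMod 2)⟦X⟧) = 0 :=
  (map_ofNat C 2).symm.trans ((congrArg C CharTwo.two_eq_zero).trans (map_zero C))

theorem expand_two_eq_sq (φ : (ZMod 2)⟦X⟧) : expand 2 two_ne_zero φ = φ ^ 2 := by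
  have h := MvPowerSeries.map_frobenius_expand 2 two_ne_zero (f := φ)
  rw [ZMod.frobenius_zmod, MvPowerSeries.map_id] at h
  exact h

theorem residuePart_sq {m : ℕ} (hm : Nat.Coprime 2 m) {r s : ZMod m} (h : 2 * r = s)
    (φ : (ZMod 2)⟦X⟧) : residuePart s (φ ^ 2) = residuePart r φ ^ 2 := by
  rw [← expand_two_eq_sq, residuePart_expand two_ne_zero hm (by exact_mod_cast h),
    expand_two_eq_sq]

theorem eulerSeries_two_pow_mul (i k : ℕ) : eulerSeries (2 ^ i * k) = eulerSeries k ^ 2 ^ i := by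
  induction i with
  | zero => simp
  | succ i ih => rw [pow_succ', mul_assoc, ← expand_eulerSeries two_ne_zero, ih,
      expand_two_eq_sq, ← pow_mul, mul_comm]

theorem triangularSeries_eq_eulerSeries_pow_three {k : ℕ} (hk : k ≠ 0) :
    triangularSeries k = eulerSeries k ^ 3 := by
  have h : triangularSeries 1 = eulerSeries 1 ^ 3 := by
    have h₄ : eulerSeries 4 = eulerSeries 1 ^ 4 := eulerSeries_two_pow_mul 2 1
    linear_combination partitionSeries 1 * eulerSeries_one_mul_triangularSeries_one +
      partitionSeries 1 * h₄ + (eulerSeries 1 ^ 3 - triangularSeries 1) *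
        partitionSeries_one_mul_eulerSeries_one
  simpa [expand_triangularSeries, expand_eulerSeries] using congrArg (expand k hk) h

theorem triangularSeries_ten : triangularSeries 10 = eulerSeries 5 ^ 6 := by
  have h : eulerSeries 10 = eulerSeries 5 ^ 2 := eulerSeries_two_pow_mul 1 5
  rw [triangularSeries_eq_eulerSeries_pow_three (by norm_num), h, ← pow_mul]

end ModTwo

section QuinticDissection

local notation "𝐟" => eulerSeries
local notation "𝐩" => partitionSeries

theorem eulerSeries_one_pow_six_add : 𝐟 1 ^ 6 + X * 𝐟 5 ^ 6 = 𝐟 1 * 𝐟 5 := by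
  have h₂ : 𝐟 2 = 𝐟 1 ^ 2 := eulerSeries_two_pow_mul 1 1
  have h₈ : 𝐟 8 = 𝐟 1 ^ 8 := eulerSeries_two_pow_mul 3 1
  have h := eulerSeries_five_mul_triangularSeries_one
  rw [triangularSeries_eq_eulerSeries_pow_three one_ne_zero, triangularSeries_ten, h₂, h₈] at h
  have hunit : IsUnit (𝐟 1 ^ 2) :=
    (IsUnit.of_mul_eq_one_right _ partitionSeries_one_mul_eulerSeries_one).pow 2
  refine hunit.mul_left_cancel ?_
  linear_combination -h

theorem residuePart_one_eulerSeries : residuePart (1 : ZMod 5) (𝐟 1) = X * 𝐟 25 := by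
  have h₂ (k : ℤ) : (2 * pentagonal k : ZMod 5) = k * (3 * k - 1) := by
    exact_mod_cast congrArg (Int.cast : ℤ → ZMod 5) (two_mul_natCast_pentagonal k)
  have hmod : ∀ x y : ZMod 5, 2 * x = y * (3 * y - 1) → (x = 1 ↔ y = 1) := by decide
  rw [← pow_one X]
  refine residuePart_weightSeries (g := fun l : ℤ => 1 - 5 * l) (fun a b h => by grind)
    (fun k => ?_) fun l => ?_
  · rw [one_mul, hmod _ _ (h₂ k), ← Int.cast_one, ZMod.intCast_eq_intCast_iff_dvd_sub]
    exact ⟨fun ⟨l, hl⟩ => ⟨l, by grind⟩, fun ⟨l, hl⟩ => ⟨l, by grind⟩⟩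
  · have h := two_mul_natCast_pentagonal l
    have h' := two_mul_natCast_pentagonal (1 - 5 * l)
    grind

theorem natCast_triangular_zmod_five (s : ℤ) :
    (triangular s : ZMod 5) = 3 * (s * (s + 1)) := by
  have h : (2 * triangular s : ZMod 5) = s * (s + 1) := by
    exact_mod_cast congrArg (Int.cast : ℤ → ZMod 5) (two_mul_natCast_triangular s)
  rw [← h, ← mul_assoc]
  exact (one_mul _).symm

theorem residuePart_three_triangularSeries :
    residuePart (3 : ZMod 5) (triangularSeries 1) = X ^ 3 * triangularSeries 25 := by
  have hmod : ∀ y : ZMod 5, 3 * (2 * y * (2 * y + 1)) = 3 ↔ y = 1 := by decide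
  refine residuePart_weightSeries (g := fun l : ℤ => 1 + 5 * l) (fun a b h => by grind)
    (fun j => ?_) fun l => ?_
  · rw [one_mul, natCast_triangular_zmod_five, Int.cast_mul, Int.cast_ofNat, hmod, eq_comm,
      ← Int.cast_one, ZMod.intCast_eq_intCast_iff_dvd_sub]
    exact ⟨fun ⟨l, hl⟩ => ⟨l, by grind⟩, fun ⟨l, hl⟩ => ⟨l, by grind⟩⟩
  · have h := two_mul_natCast_triangular (2 * l)
    have h' := two_mul_natCast_triangular (2 * (1 + 5 * l))
    grind

theorem residuePart_triangularSeries_eq_zero {r : ZMod 5} (hr : r = 2 ∨ r = 4) :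
    residuePart r (triangularSeries 1) = 0 := by
  refine residuePart_weightSeries_eq_zero fun j => ?_
  rw [one_mul, natCast_triangular_zmod_five]
  generalize ((2 * j : ℤ) : ZMod 5) = x
  revert x r
  decide

theorem residuePart_mul_eulerSeries_pow (r : ZMod 5) (φ : (ZMod 2)⟦X⟧) (j k : ℕ) :
    residuePart r (φ * 𝐟 (5 * j) ^ k) = residuePart r φ * 𝐟 (5 * j) ^ k := by
  rw [← expand_eulerSeries (c := 5) (by norm_num), ← map_pow, residuePart_mul_expand]

theorem residuePart_mul_eulerSeries (r : ZMod 5) (φ : (ZMod 2)⟦X⟧) (j : ℕ) :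
    residuePart r (φ * 𝐟 (5 * j)) = residuePart r φ * 𝐟 (5 * j) := by
  simpa only [pow_one] using residuePart_mul_eulerSeries_pow r φ j 1

theorem X_mul_partitionSeries_sq_mul :
    X * (𝐩 1 ^ 2 * 𝐟 5 ^ 6) = 𝐟 1 ^ 4 + 𝐩 1 * 𝐟 5 := by
  linear_combination 𝐩 1 ^ 2 * eulerSeries_one_pow_six_add +
    (𝐩 1 * 𝐟 5 - 𝐟 1 ^ 4 * (𝐩 1 * 𝐟 1 + 1)) * partitionSeries_one_mul_eulerSeries_one -
      𝐟 1 ^ 4 * powerSeries_two_eq_zero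

theorem X_mul_partitionSeries_cube_mul :
    X * (𝐩 1 ^ 3 * 𝐟 5 ^ 6) = 𝐟 1 ^ 3 + 𝐩 1 ^ 2 * 𝐟 5 := by
  linear_combination 𝐩 1 * X_mul_partitionSeries_sq_mul +
    𝐟 1 ^ 3 * partitionSeries_one_mul_eulerSeries_one

theorem residuePart_four_eulerSeries_pow_four :
    residuePart (4 : ZMod 5) (𝐟 1 ^ 4) = X ^ 4 * 𝐟 25 ^ 4 := by
  rw [show 𝐟 1 ^ 4 = (𝐟 1 ^ 2) ^ 2 by ring,
    residuePart_sq (r := (2 : ZMod 5)) (s := 4) (by norm_num) rfl,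
    residuePart_sq (r := (1 : ZMod 5)) (s := 2) (by norm_num) rfl, residuePart_one_eulerSeries]
  ring

theorem residuePart_three_partitionSeries_sq :
    residuePart (3 : ZMod 5) (𝐩 1 ^ 2) = residuePart (4 : ZMod 5) (𝐩 1) ^ 2 :=
  residuePart_sq (r := (4 : ZMod 5)) (s := 3) (by norm_num) rfl _

/-- Squaring doubles exponents, so that `X_mul_partitionSeries_sq_mul` restricted to the exponents
`4` modulo `5` is a quadratic equation for this part. -/
theorem residuePart_four_partitionSeries :
    residuePart (4 : ZMod 5) (𝐩 1) = X ^ 4 * 𝐟 25 ^ 5 * 𝐩 5 ^ 6 := by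
  have hinv : 𝐩 5 * 𝐟 5 = 1 := partitionSeries_mul_eulerSeries (by norm_num)
  have hpow : (𝐩 5 * 𝐟 5) ^ 6 = 1 := by rw [hinv, one_pow]
  have hquad := congrArg (residuePart (4 : ZMod 5)) X_mul_partitionSeries_sq_mul
  rw [← pow_one X, residuePart_X_pow_mul (r := (3 : ZMod 5)) (s := 4) rfl, map_add,
    residuePart_mul_eulerSeries_pow _ _ 1, residuePart_mul_eulerSeries _ _ 1,
    residuePart_four_eulerSeries_pow_four, residuePart_three_partitionSeries_sq] at hquad
  have hsix : 𝐟 5 ^ 6 + X ^ 5 * 𝐟 25 ^ 6 = 𝐟 5 * 𝐟 25 := by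
    simpa [expand_eulerSeries] using congrArg (expand 5 (by norm_num)) eulerSeries_one_pow_six_add
  refine eq_of_X_mul_sq_add_mul_eq (a := 𝐟 5 ^ 6) (b := 𝐟 5) ?_ ?_
  · intro h
    simpa [h] using congrArg constantCoeff hinv
  · linear_combination hquad - X ^ 4 * 𝐟 25 ^ 4 * 𝐩 5 ^ 6 * hsix -
      (X ^ 9 * 𝐟 25 ^ 10 * 𝐩 5 ^ 6 - X ^ 4 * 𝐟 25 ^ 4) * hpow +
      (𝐟 5 * residuePart (4 : ZMod 5) (𝐩 1) - X ^ 4 * 𝐟 25 ^ 5 * 𝐩 5 ^ 6 * 𝐟 5 +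
        X ^ 4 * 𝐟 25 ^ 4) * powerSeries_two_eq_zero

theorem residuePart_two_partitionSeries_cube :
    residuePart (2 : ZMod 5) (𝐩 1 ^ 3) =
      X ^ 2 * (𝐟 25 ^ 3 * 𝐩 5 ^ 6 + X ^ 5 * 𝐟 25 ^ 10 * 𝐩 5 ^ 17) := by
  have hinv : 𝐩 5 * 𝐟 5 = 1 := partitionSeries_mul_eulerSeries (by norm_num)
  have hpow : (𝐩 5 * 𝐟 5) ^ 6 = 1 := by rw [hinv, one_pow]
  have hlin := congrArg (residuePart (3 : ZMod 5)) X_mul_partitionSeries_cube_mul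
  rw [← pow_one X, residuePart_X_pow_mul (r := (2 : ZMod 5)) (s := 3) rfl, map_add,
    residuePart_mul_eulerSeries_pow _ _ 1, residuePart_mul_eulerSeries _ _ 1,
    ← triangularSeries_eq_eulerSeries_pow_three one_ne_zero, residuePart_three_triangularSeries,
    triangularSeries_eq_eulerSeries_pow_three (by norm_num), residuePart_three_partitionSeries_sq,
    residuePart_four_partitionSeries] at hlin
  refine mul_left_cancel₀ X_ne_zero ?_
  linear_combination 𝐩 5 ^ 6 * hlin -
    X * residuePart (2 : ZMod 5) (𝐩 1 ^ 3) * hpow + X ^ 8 * 𝐟 25 ^ 10 * 𝐩 5 ^ 17 * hinv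

theorem natCast_numRegularPartitions_five_mul_add_four (n : ℕ) :
    (numRegularPartitions 200 (5 * n + 4) : ZMod 2) = coeff n (𝐩 1 ^ 6 * 𝐟 5 ^ 13) := by
  have hf : expand 5 (by norm_num) (𝐟 5) = 𝐟 25 := expand_eulerSeries _ _
  have hp : expand 5 (by norm_num) (𝐩 1) = 𝐩 5 := expand_partitionSeries _ _
  have h₂₀₀ : 𝐟 200 = 𝐟 25 ^ 8 := eulerSeries_two_pow_mul 3 25
  have hres : residuePart ((4 : ℕ) : ZMod 5) (𝐩 1 * 𝐟 200) =
      X ^ 4 * expand 5 (by norm_num) (𝐩 1 ^ 6 * 𝐟 5 ^ 13) := by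
    rw [h₂₀₀, residuePart_mul_eulerSeries_pow _ _ 5, Nat.cast_ofNat,
      residuePart_four_partitionSeries, map_mul, map_pow, map_pow, hf, hp]
    ring
  rw [← coeff_of_residuePart_eq _ hres, ← mk_numRegularPartitions (by norm_num), coeff_mk]

theorem natCast_numRegularPartitions_twenty_five_mul_add (n : ℕ) :
    (numRegularPartitions 200 (25 * n + 24) : ZMod 2) =
      coeff n (𝐟 1 * 𝐟 5 ^ 6 + X ^ 2 * (𝐩 1 ^ 21 * 𝐟 5 ^ 20)) := by
  have hf₁ : expand 5 (by norm_num) (𝐟 1) = 𝐟 5 := expand_eulerSeries _ _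
  have hf₅ : expand 5 (by norm_num) (𝐟 5) = 𝐟 25 := expand_eulerSeries _ _
  have hp : expand 5 (by norm_num) (𝐩 1) = 𝐩 5 := expand_partitionSeries _ _
  have hinv : 𝐩 5 * 𝐟 5 = 1 := partitionSeries_mul_eulerSeries (by norm_num)
  have h₁₂ : (𝐩 5 * 𝐟 5) ^ 12 = 1 := by rw [hinv, one_pow]
  have h₁₃ : (𝐩 5 * 𝐟 5) ^ 13 = 1 := by rw [hinv, one_pow]
  have hres : residuePart ((4 : ℕ) : ZMod 5) (𝐩 1 ^ 6 * 𝐟 5 ^ 13) =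
      X ^ 4 * expand 5 (by norm_num) (𝐟 1 * 𝐟 5 ^ 6 + X ^ 2 * (𝐩 1 ^ 21 * 𝐟 5 ^ 20)) := by
    rw [residuePart_mul_eulerSeries_pow _ _ 1, pow_mul (𝐩 1) 3 2, Nat.cast_ofNat,
      residuePart_sq (r := (2 : ZMod 5)) (s := 4) (by norm_num) rfl,
      residuePart_two_partitionSeries_cube]
    simp only [map_add, map_mul, map_pow, expand_X, hf₁, hf₅, hp]
    linear_combination X ^ 4 * 𝐟 25 ^ 6 * 𝐟 5 * h₁₂ + X ^ 14 * 𝐟 25 ^ 20 * 𝐩 5 ^ 21 * h₁₃ +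
      X ^ 9 * 𝐟 25 ^ 13 * 𝐩 5 ^ 23 * 𝐟 5 ^ 13 * powerSeries_two_eq_zero
  rw [← coeff_of_residuePart_eq _ hres, ← natCast_numRegularPartitions_five_mul_add_four]
  congr 2
  ring

theorem X_pow_four_mul_partitionSeries_pow :
    X ^ 4 * (𝐩 1 ^ 21 * 𝐟 5 ^ 20) = 𝐩 1 ^ 17 + 𝐟 1 ^ 3 * 𝐩 5 ^ 4 := by
  have h₂ : 𝐟 1 ^ 12 + X ^ 2 * 𝐟 5 ^ 12 = 𝐟 1 ^ 2 * 𝐟 5 ^ 2 := by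
    linear_combination (𝐟 1 ^ 6 + X * 𝐟 5 ^ 6 + 𝐟 1 * 𝐟 5) * eulerSeries_one_pow_six_add -
      X * 𝐟 1 ^ 6 * 𝐟 5 ^ 6 * powerSeries_two_eq_zero
  have h₄ : 𝐟 1 ^ 24 + X ^ 4 * 𝐟 5 ^ 24 = 𝐟 1 ^ 4 * 𝐟 5 ^ 4 := by
    linear_combination (𝐟 1 ^ 12 + X ^ 2 * 𝐟 5 ^ 12 + 𝐟 1 ^ 2 * 𝐟 5 ^ 2) * h₂ -
      X ^ 2 * 𝐟 1 ^ 12 * 𝐟 5 ^ 12 * powerSeries_two_eq_zero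
  have hpow₁ (k : ℕ) : (𝐩 1 * 𝐟 1) ^ k = 1 := by
    rw [partitionSeries_one_mul_eulerSeries_one, one_pow]
  have hpow₅ : (𝐩 5 * 𝐟 5) ^ 4 = 1 := by
    rw [partitionSeries_mul_eulerSeries (by norm_num), one_pow]
  linear_combination 𝐩 1 ^ 21 * 𝐩 5 ^ 4 * h₄ - 𝐟 1 ^ 3 * 𝐩 5 ^ 4 * hpow₁ 21 +
    𝐩 1 ^ 17 * (𝐩 5 * 𝐟 5) ^ 4 * hpow₁ 4 +
    (𝐩 1 ^ 17 - X ^ 4 * 𝐩 1 ^ 21 * 𝐟 5 ^ 20) * hpow₅ -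
    𝐟 1 ^ 3 * 𝐩 5 ^ 4 * powerSeries_two_eq_zero

theorem natCast_numRegularPartitions_eq_add (n : ℕ) :
    (numRegularPartitions 200 (25 * n + 24) : ZMod 2) =
      coeff n (𝐟 1 * 𝐟 5 ^ 6) + numMultipartitions 17 (n + 2) +
        coeff (n + 2) (𝐟 1 ^ 3 * 𝐩 5 ^ 4) := by
  rw [natCast_numRegularPartitions_twenty_five_mul_add, map_add,
    ← coeff_X_pow_mul (X ^ 2 * _) 2 n, ← mul_assoc (X ^ 2), ← pow_add,
    X_pow_four_mul_partitionSeries_pow, map_add, coeff_partitionSeries_one_pow, add_assoc]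

theorem coeff_eulerSeries_cube_mul_eq_zero {n : ℕ} (hn : n % 5 = 2 ∨ n % 5 = 4) :
    coeff n (𝐟 1 ^ 3 * 𝐩 5 ^ 4) = 0 := by
  have hp : expand 5 (by norm_num) (𝐩 1) = 𝐩 5 := expand_partitionSeries _ _
  have hr : (n : ZMod 5) = 2 ∨ (n : ZMod 5) = 4 := by
    rw [← ZMod.natCast_mod]
    exact hn.imp (congrArg Nat.cast) (congrArg Nat.cast)
  have hres : residuePart (n : ZMod 5) (𝐟 1 ^ 3 * 𝐩 5 ^ 4) = 0 := by
    rw [← hp, ← map_pow, residuePart_mul_expand,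
      ← triangularSeries_eq_eulerSeries_pow_three one_ne_zero,
      residuePart_triangularSeries_eq_zero hr, zero_mul]
  simpa [coeff_residuePart] using congrArg (coeff n) hres

end QuinticDissection

theorem natCast_eq_sq_add_mul_sq_of_mixedWeight_eq {k s : ℤ} {n : ℕ}
    (h : mixedWeight 1 10 (k, s) = n) :
    (24 * n + 31 : ℤ) = (6 * k - 1) ^ 2 + 30 * (2 * s + 1) ^ 2 := by
  have := two_mul_natCast_mixedWeight 1 10 (k, s)
  grind

theorem coeff_eulerSeries_mul_pow_six_eq_zero {p : ℕ} [Fact p.Prime]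
    (hp : legendreSym p (-30) = -1) {n : ℕ} (hdvd : p ∣ 24 * n + 31)
    (hsq : ¬ p ^ 2 ∣ 24 * n + 31) :
    coeff n (eulerSeries 1 * eulerSeries 5 ^ 6) = 0 := by
  have hempty : IsEmpty {q : OddPair // mixedWeight 1 10 q = n} := by
    refine ⟨fun ⟨⟨⟨k, s⟩, _⟩, h⟩ => hsq ?_⟩
    have hform := natCast_eq_sq_add_mul_sq_of_mixedWeight_eq h
    obtain ⟨hx, hy⟩ : (p : ℤ) ∣ 6 * k - 1 ∧ (p : ℤ) ∣ 2 * s + 1 := by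
      refine legendreSym.prime_dvd_of_eq_neg_one hp ?_
      rw [neg_mul, sub_neg_eq_add, ← hform]
      exact_mod_cast hdvd
    zify
    rw [hform]
    exact dvd_add (pow_dvd_pow_of_dvd hx 2) ((pow_dvd_pow_of_dvd hy 2).mul_left 30)
  rw [← triangularSeries_ten, eulerSeries_mul_triangularSeries one_ne_zero (by norm_num),
    coeff_weightSeries]
  simp

theorem stmt_9_general {p : ℕ} [Fact p.Prime] (hp : legendreSym p (-30) = -1) {n : ℕ}
    (hmod : n % 5 = 0 ∨ n % 5 = 2) (hdvd : p ∣ 24 * n + 31) (hsq : ¬ p ^ 2 ∣ 24 * n + 31) :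
    numRegularPartitions 200 (25 * n + 24) ≡ numMultipartitions 17 (n + 2) [MOD 2] := by
  rw [← ZMod.natCast_eq_natCast_iff, natCast_numRegularPartitions_eq_add,
    coeff_eulerSeries_mul_pow_six_eq_zero hp hdvd hsq,
    coeff_eulerSeries_cube_mul_eq_zero (by omega), zero_add, add_zero]

theorem stmt_9 (n : ℕ) :
    (∀ B ∈ ({22, 29, 92, 127, 169, 239} : Finset ℕ),
      numRegularPartitions 200 (6125 * n + 25 * B - 26) ≡
        numMultipartitions 17 (245 * n + B) [MOD 2]) := by
  intro B hB
  simp only [Finset.mem_insert, Finset.mem_singleton] at hB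
  have : Fact (Nat.Prime 7) := ⟨by norm_num⟩
  have hp : legendreSym 7 (-30) = -1 := by norm_num
  have h := stmt_9_general hp (n := 245 * n + B - 2) (by omega) (by omega) (by omega)
  rwa [show 25 * (245 * n + B - 2) + 24 = 6125 * n + 25 * B - 26 by omega,
    show 245 * n + B - 2 + 2 = 245 * n + B by omega] at h
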